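/- Let n ≥ 1, let ρ be a convolution kernel on ℝⁿ as in the context, let A' ⊆ ℝⁿ be open and bounded, and for each j ∈ ℕ let g_j : ℝⁿ → [0,∞) be integrable, vanishing outside A', with the family (g_j) equi-integrable. Let (δ_j) be positive reals with δ_j → 0, and let A ⊆ ℝⁿ be open with compact closure contained in A'. Then liminf_{j→∞} ∫_A (g_j * ρ_{δ_j})(x) dx ≥ liminf_{j→∞} ∫_A g_j(x) dx. -/

import Mathlib

open MeasureTheory Filter Topology

/-- The rescaled mollification `(g * ρ_δ)(x) = ∫ g(y) δ^{-n} ρ((x-y)/δ) dy`. -/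
noncomputable def mollify (n : ℕ) (ρ : (Fin n → ℝ) → ℝ) (δ : ℝ)
    (g : (Fin n → ℝ) → ℝ) (x : Fin n → ℝ) : ℝ :=
  ∫ y, g y * ((δ ^ n)⁻¹ * ρ (δ⁻¹ • (x - y)))

/-!
By Fubini and the substitution `x = y + δ z`, `∫_A g * ρ_δ = ∫ g h_δ`, where `h_δ y = ∫ ρ z dz` over
those `z` with `y + δ z ∈ A`. Hence `∫_A g_j ≤ ∫_A g_j * ρ_{δ_j} + ∫_A (1 - h_{δ_j}) g_j`. Since `A`
is open, `h_δ → 1` pointwise on `A` by dominated convergence, hence in measure because `A` has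
finite measure; as the `g_j` are uniformly integrable, the last term tends to zero.
Boundedness in `L¹`, needed for this, follows from equi-integrability by covering a compact set
containing all the supports with finitely many open sets of small measure.
-/

open Set Module
open scoped ENNReal NNReal

section UniformIntegrability

variable {α ι F : Type*} [MeasurableSpace α] {μ : Measure α}

theorem eLpNorm_one_indicator_eq_ofReal_setIntegral_norm [NormedAddCommGroup F] {f : α → F}
    (hf : Integrable f μ) {s : Set α} (hs : MeasurableSet s) :
    eLpNorm (s.indicator f) 1 μ = ENNReal.ofReal (∫ x in s, ‖f x‖ ∂μ) := by
  rw [eLpNorm_indicator_eq_eLpNorm_restrict hs, eLpNorm_one_eq_lintegral_enorm,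
    ofReal_integral_norm_eq_lintegral_enorm hf.integrableOn]

theorem unifIntegrable_one_iff_setIntegral_norm_le [NormedAddCommGroup F] {f : ι → α → F}
    (hf : ∀ i, Integrable (f i) μ) :
    UnifIntegrable f 1 μ ↔ ∀ ε > (0 : ℝ), ∃ η > (0 : ℝ), ∀ i, ∀ s : Set α,
      MeasurableSet s → μ s ≤ ENNReal.ofReal η → ∫ x in s, ‖f i x‖ ∂μ ≤ ε := by
  refine forall₂_congr fun ε hε => exists_congr fun η => ?_
  rw [exists_prop]
  refine and_congr_right fun _ => forall₄_congr fun i s hs _ => ?_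
  rw [eLpNorm_one_indicator_eq_ofReal_setIntegral_norm (hf i) hs,
    ENNReal.ofReal_le_ofReal_iff hε.le]

theorem uniformIntegrable_restrict [NormedAddCommGroup F] {f : ι → α → F} {p : ℝ≥0∞}
    (hf : UniformIntegrable f p μ) (s : Set α) : UniformIntegrable f p (μ.restrict s) := by
  obtain ⟨hmeas, hunif, C, hC⟩ := hf
  exact ⟨fun i => (hmeas i).restrict, hunif.restrict s, C,
    fun i => (eLpNorm_mono_measure _ Measure.restrict_le_self).trans (hC i)⟩

theorem exists_eLpNorm_one_restrict_le_of_isCompact [TopologicalSpace α] [OpensMeasurableSpace α]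
    [μ.OuterRegular] [NullSingletonClass μ] [NormedAddCommGroup F] {f : ι → α → F}
    (hf : UnifIntegrable f 1 μ) {K : Set α} (hK : IsCompact K) :
    ∃ C : ℝ≥0, ∀ i, eLpNorm (f i) 1 (μ.restrict K) ≤ C := by
  refine hK.induction_on ⟨0, by simp⟩ ?_ ?_ fun x _ => ?_
  · rintro s t hst ⟨C, hC⟩
    exact ⟨C, fun i => (eLpNorm_mono_measure _ (Measure.restrict_mono_set μ hst)).trans (hC i)⟩
  · rintro s t ⟨C, hC⟩ ⟨D, hD⟩
    refine ⟨C + D, fun i => ?_⟩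
    calc eLpNorm (f i) 1 (μ.restrict (s ∪ t))
        ≤ eLpNorm (f i) 1 (μ.restrict s + μ.restrict t) :=
          eLpNorm_mono_measure _ (Measure.restrict_union_le s t)
      _ ≤ (C + D : ℝ≥0) := by
          rw [eLpNorm_one_add_measure, ENNReal.coe_add]
          exact add_le_add (hC i) (hD i)
  · obtain ⟨η, hη, h⟩ := hf one_pos
    obtain ⟨U, hxU, hU, hUη⟩ := Set.exists_isOpen_lt_of_lt {x} (ENNReal.ofReal η)
      ((measure_singleton (μ := μ) x).trans_lt (ENNReal.ofReal_pos.2 hη))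
    refine ⟨U, mem_nhdsWithin_of_mem_nhds (hU.mem_nhds (singleton_subset_iff.1 hxU)), 1,
      fun i => ?_⟩
    simpa [eLpNorm_indicator_eq_eLpNorm_restrict hU.measurableSet] using
      h i U hU.measurableSet hUη.le

theorem uniformIntegrable_one_of_eq_zero_outside_compact [TopologicalSpace α]
    [OpensMeasurableSpace α] [μ.OuterRegular] [NullSingletonClass μ] [NormedAddCommGroup F]
    {f : ι → α → F} (hf_meas : ∀ i, AEStronglyMeasurable (f i) μ) (hf : UnifIntegrable f 1 μ)
    {K : Set α} (hK : IsCompact K) (hfK : ∀ i, ∀ x ∉ K, f i x = 0) :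
    UniformIntegrable f 1 μ := by
  obtain ⟨C, hC⟩ := exists_eLpNorm_one_restrict_le_of_isCompact hf hK
  refine ⟨hf_meas, hf, C, fun i => ?_⟩
  rw [← eLpNorm_restrict_eq_of_support_subset (s := K) fun x hx => ?_]
  · exact hC i
  · exact not_imp_comm.1 (hfK i x) hx

theorem eLpNorm_smul_le_indicator_add {𝕜 : Type*} [NormedField 𝕜] [NormedAddCommGroup F]
    [NormedSpace 𝕜 F] {p : ℝ≥0∞} (hp : 1 ≤ p) {f : α → F} {φ : α → 𝕜}
    (hf : AEStronglyMeasurable f μ) (hφ_le : ∀ x, ‖φ x‖ ≤ 1) {η : ℝ} (hη : 0 ≤ η) {s : Set α}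
    (hs : MeasurableSet s) (hφ_small : ∀ x ∉ s, ‖φ x‖ ≤ η) :
    eLpNorm (φ • f) p μ ≤ eLpNorm (s.indicator f) p μ + ENNReal.ofReal η * eLpNorm f p μ := by
  have hpt : ∀ x, ‖(φ • f) x‖ ≤ ‖s.indicator f x‖ + η * ‖f x‖ := by
    intro x
    rw [Pi.smul_apply', norm_smul]
    by_cases hx : x ∈ s
    · rw [indicator_of_mem hx]
      exact (mul_le_of_le_one_left (norm_nonneg _) (hφ_le x)).trans
        (le_add_of_nonneg_right (by positivity))
    · rw [indicator_of_notMem hx, norm_zero, zero_add]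
      exact mul_le_mul_of_nonneg_right (hφ_small x hx) (norm_nonneg _)
  calc eLpNorm (φ • f) p μ
      ≤ eLpNorm (fun x => ‖s.indicator f x‖ + η * ‖f x‖) p μ := eLpNorm_mono_real hpt
    _ ≤ eLpNorm (fun x => ‖s.indicator f x‖) p μ + eLpNorm (η • fun x => ‖f x‖) p μ :=
        eLpNorm_add_le (hf.indicator hs).norm (hf.norm.const_smul η) hp
    _ = eLpNorm (s.indicator f) p μ + ENNReal.ofReal η * eLpNorm f p μ := by
        rw [eLpNorm_norm, eLpNorm_const_smul, eLpNorm_norm, Real.enorm_of_nonneg hη]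

theorem tendsto_eLpNorm_smul_zero_of_tendstoInMeasure {𝕜 : Type*} [NormedField 𝕜]
    [NormedAddCommGroup F] [NormedSpace 𝕜 F] {p : ℝ≥0∞} (hp : 1 ≤ p) {l : Filter ι}
    {f : ι → α → F} {φ : ι → α → 𝕜} (hf : UniformIntegrable f p μ)
    (hφ_le : ∀ i x, ‖φ i x‖ ≤ 1) (hφ : TendstoInMeasure μ φ l 0) :
    Tendsto (fun i => eLpNorm (φ i • f i) p μ) l (𝓝 0) := by
  obtain ⟨hmeas, hunif, C, hC⟩ := hf
  have hbound : ∀ η > (0 : ℝ), ∀ᶠ i in l,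
      eLpNorm (φ i • f i) p μ ≤ ENNReal.ofReal η * (1 + C) := by
    intro η hη
    obtain ⟨ζ, hζ, hsmall⟩ := hunif hη
    filter_upwards [(tendstoInMeasure_iff_norm.1 hφ η hη).eventually_le_const
      (ENNReal.ofReal_pos.2 hζ)] with i hi
    set s := toMeasurable μ {x | η ≤ ‖φ i x - (0 : α → 𝕜) x‖}
    have hs : MeasurableSet s := measurableSet_toMeasurable _ _
    have hφ_small : ∀ x ∉ s, ‖φ i x‖ ≤ η := fun x hx => by
      have hlt : ‖φ i x‖ < η := by
        simpa using fun h => hx (subset_toMeasurable _ _ h)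
      exact hlt.le
    calc eLpNorm (φ i • f i) p μ
        ≤ eLpNorm (s.indicator (f i)) p μ + ENNReal.ofReal η * eLpNorm (f i) p μ :=
          eLpNorm_smul_le_indicator_add hp (hmeas i) (hφ_le i) hη.le hs hφ_small
      _ ≤ ENNReal.ofReal η + ENNReal.ofReal η * C := by
          gcongr
          · exact hsmall i s hs (by rwa [measure_toMeasurable])
          · exact hC i
      _ = ENNReal.ofReal η * (1 + C) := by rw [mul_add, mul_one]
  have hlim : Tendsto (fun η => ENNReal.ofReal η * (1 + C)) (𝓝[>] 0) (𝓝 0) := by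
    have h := ENNReal.Tendsto.mul_const (b := 1 + (C : ℝ≥0∞))
      (ENNReal.tendsto_ofReal (tendsto_id (x := 𝓝 (0 : ℝ)))) (.inr (by finiteness))
    rw [ENNReal.ofReal_zero, zero_mul] at h
    exact h.mono_left nhdsWithin_le_nhds
  refine ENNReal.tendsto_nhds_zero.2 fun ε hε => ?_
  obtain ⟨η, hηε, hη⟩ := ((hlim.eventually_le_const hε).and self_mem_nhdsWithin).exists
  filter_upwards [hbound η hη] with i hi using hi.trans hηε

theorem exists_integral_le_of_uniformIntegrable {f : ι → α → ℝ}
    (hf : UniformIntegrable f 1 μ) : ∃ C : ℝ, ∀ i, ∫ x, f i x ∂μ ≤ C := by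
  obtain ⟨-, -, C, hC⟩ := hf
  refine ⟨C, fun i => (Real.le_norm_self _).trans ?_⟩
  suffices h : ‖∫ x, f i x ∂μ‖ₑ ≤ C from enorm_le_coe.1 h
  calc ‖∫ x, f i x ∂μ‖ₑ ≤ ∫⁻ x, ‖f i x‖ₑ ∂μ := enorm_integral_le_lintegral_enorm _
    _ = eLpNorm (f i) 1 μ := eLpNorm_one_eq_lintegral_enorm.symm
    _ ≤ C := hC i

end UniformIntegrability

theorem liminf_le_liminf_of_le_add {ι : Type*} {l : Filter ι} [l.NeBot] {u v w : ι → ℝ}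
    (huvw : ∀ i, u i ≤ v i + w i) (hw : Tendsto w l (𝓝 0))
    (hu_ge : l.IsBoundedUnder (· ≥ ·) u) (hu_le : l.IsBoundedUnder (· ≤ ·) u)
    (hv : l.IsCoboundedUnder (· ≥ ·) v) : liminf u l ≤ liminf v l := by
  have hw' : Tendsto (-w) l (𝓝 0) := neg_zero (G := ℝ) ▸ hw.neg
  calc liminf u l = liminf u l + liminf (-w) l := by rw [hw'.liminf_eq, add_zero]
    _ ≤ liminf (u + -w) l := le_liminf_add hu_ge hu_le hw'.isBoundedUnder_ge
        hw'.isBoundedUnder_le.isCoboundedUnder_ge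
    _ ≤ liminf v l := liminf_le_liminf
        (.of_forall fun i => by simpa [← sub_eq_add_neg] using huvw i)
        (isBoundedUnder_ge_add hu_ge hw'.isBoundedUnder_ge) hv

section KernelMass

variable {E : Type*} [NormedAddCommGroup E] [NormedSpace ℝ E] [MeasurableSpace E]

/-- The mass which the kernel `ρ`, rescaled by `δ` and centred at `y`, puts on `A`. It is written
as an integral of `ρ` itself, over the preimage of `A` under `z ↦ y + δ z`, so that the limit
`δ → 0` can be taken under a fixed integrand. -/
noncomputable def kernelMass (μ : Measure E) (ρ : E → ℝ) (A : Set E) (δ : ℝ) (y : E) : ℝ :=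
  ∫ z in {z | y + δ • z ∈ A}, ρ z ∂μ

variable {μ : Measure E} {ρ : E → ℝ} {A : Set E}

theorem kernelMass_nonneg (hρ_nonneg : ∀ x, 0 ≤ ρ x) (δ : ℝ) (y : E) :
    0 ≤ kernelMass μ ρ A δ y :=
  integral_nonneg hρ_nonneg

theorem kernelMass_le_integral (hρ_nonneg : ∀ x, 0 ≤ ρ x) (hρ : Integrable ρ μ) (δ : ℝ) (y : E) :
    kernelMass μ ρ A δ y ≤ ∫ z, ρ z ∂μ :=
  setIntegral_le_integral hρ (.of_forall hρ_nonneg)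

variable [BorelSpace E]

theorem aestronglyMeasurable_kernelMass [SecondCountableTopology E] [SFinite μ]
    (hρ : AEStronglyMeasurable ρ μ) (hA : MeasurableSet A) (δ : ℝ) {ν : Measure E} :
    AEStronglyMeasurable (kernelMass μ ρ A δ) ν := by
  have hS : MeasurableSet {p : E × E | p.1 + δ • p.2 ∈ A} :=
    hA.preimage (measurable_fst.add (measurable_snd.const_smul δ))
  refine ((hρ.comp_snd (μ := ν)).indicator hS).integral_prod_right'.congr (.of_forall fun y => ?_)
  exact integral_indicator (hS.preimage measurable_prodMk_left)

theorem tendsto_kernelMass {ι : Type*} {l : Filter ι} [l.IsCountablyGenerated] {δ : ι → ℝ}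
    (hρ : Integrable ρ μ) (hA : IsOpen A) (hδ : Tendsto δ l (𝓝 0)) {y : E} (hy : y ∈ A) :
    Tendsto (fun i => kernelMass μ ρ A (δ i) y) l (𝓝 (∫ z, ρ z ∂μ)) := by
  have hmeas (i) : MeasurableSet {z | y + δ i • z ∈ A} :=
    (hA.preimage (by fun_prop : Continuous fun z => y + δ i • z)).measurableSet
  simp only [kernelMass, ← integral_indicator (hmeas _)]
  refine tendsto_integral_filter_of_dominated_convergence (fun z => ‖ρ z‖)
    (.of_forall fun i => hρ.aestronglyMeasurable.indicator (hmeas i))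
    (.of_forall fun i => .of_forall fun z => norm_indicator_le_norm_self _ _) hρ.norm
    (.of_forall fun z => ?_)
  have hz : Tendsto (fun i => y + δ i • z) l (𝓝 y) := by
    simpa using (hδ.smul_const z).const_add y
  refine tendsto_const_nhds.congr' ?_
  filter_upwards [hz.eventually_mem (hA.mem_nhds hy)] with i hi
  exact (indicator_of_mem (s := {z | y + δ i • z ∈ A}) hi ρ).symm

theorem integrable_mul_kernelMass [SecondCountableTopology E] [SFinite μ] {g : E → ℝ}
    (hρ_nonneg : ∀ x, 0 ≤ ρ x) (hρ : Integrable ρ μ) (hg : Integrable g μ)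
    (hA : MeasurableSet A) (δ : ℝ) :
    Integrable (fun y => g y * kernelMass μ ρ A δ y) μ :=
  hg.mul_bdd (aestronglyMeasurable_kernelMass hρ.aestronglyMeasurable hA δ) <|
    .of_forall fun y => by
      rw [Real.norm_of_nonneg (kernelMass_nonneg hρ_nonneg δ y)]
      exact kernelMass_le_integral hρ_nonneg hρ δ y

theorem tendstoInMeasure_one_sub_kernelMass [SecondCountableTopology E] [SFinite μ] {δ : ℕ → ℝ}
    (hρ : Integrable ρ μ) (hρ_int : ∫ x, ρ x ∂μ = 1) (hA : IsOpen A) (hA_fin : μ A ≠ ∞)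
    (hδ : Tendsto δ atTop (𝓝 0)) :
    TendstoInMeasure (μ.restrict A) (fun j y => 1 - kernelMass μ ρ A (δ j) y) atTop 0 := by
  have : IsFiniteMeasure (μ.restrict A) := isFiniteMeasure_restrict.2 hA_fin
  refine tendstoInMeasure_of_tendsto_ae (fun j => aestronglyMeasurable_const.sub
    (aestronglyMeasurable_kernelMass hρ.aestronglyMeasurable hA.measurableSet _)) ?_
  filter_upwards [ae_restrict_mem hA.measurableSet] with y hy
  simpa [hρ_int] using (tendsto_kernelMass hρ hA hδ hy).const_sub 1

theorem tendsto_setIntegral_one_sub_kernelMass_mul [SecondCountableTopology E] [SFinite μ]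
    {g : ℕ → E → ℝ} {δ : ℕ → ℝ} (hρ_nonneg : ∀ x, 0 ≤ ρ x) (hρ : Integrable ρ μ)
    (hρ_int : ∫ x, ρ x ∂μ = 1) (hg : UniformIntegrable g 1 μ) (hA : IsOpen A) (hA_fin : μ A ≠ ∞)
    (hδ : Tendsto δ atTop (𝓝 0)) :
    Tendsto (fun j => ∫ y in A, (1 - kernelMass μ ρ A (δ j) y) * g j y ∂μ) atTop (𝓝 0) := by
  have hle (j y) : ‖1 - kernelMass μ ρ A (δ j) y‖ ≤ 1 := by
    have h0 := kernelMass_nonneg (μ := μ) (A := A) hρ_nonneg (δ j) y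
    have h1 := kernelMass_le_integral (A := A) hρ_nonneg hρ (δ j) y
    rw [Real.norm_of_nonneg] <;> linarith
  refine tendsto_zero_iff_enorm_tendsto_zero.2 <| tendsto_of_tendsto_of_tendsto_of_le_of_le
    tendsto_const_nhds (tendsto_eLpNorm_smul_zero_of_tendstoInMeasure le_rfl
      (uniformIntegrable_restrict hg A) hle
      (tendstoInMeasure_one_sub_kernelMass hρ hρ_int hA hA_fin hδ))
    (fun _ => zero_le) fun j => ?_
  rw [eLpNorm_one_eq_lintegral_enorm]
  exact enorm_integral_le_lintegral_enorm _

theorem setIntegral_rescale_eq_kernelMass [FiniteDimensional ℝ E] [μ.IsAddHaarMeasure]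
    (hA : MeasurableSet A) {δ : ℝ} (hδ : 0 < δ) (y : E) :
    ∫ x in A, (δ ^ finrank ℝ E)⁻¹ * ρ (δ⁻¹ • (x - y)) ∂μ = kernelMass μ ρ A δ y := by
  set F : E → ℝ := A.indicator fun x => ρ (δ⁻¹ • (x - y))
  have hF : ∀ z, F (y + δ • z) = {z | y + δ • z ∈ A}.indicator ρ z := fun z => by
    by_cases hz : y + δ • z ∈ A <;> simp [F, hz, smul_smul, hδ.ne']
  have hS : MeasurableSet {z | y + δ • z ∈ A} :=
    hA.preimage ((measurable_const_smul δ).const_add y)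
  calc ∫ x in A, (δ ^ finrank ℝ E)⁻¹ * ρ (δ⁻¹ • (x - y)) ∂μ
      = (δ ^ finrank ℝ E)⁻¹ * ∫ x, F x ∂μ := by rw [integral_const_mul, integral_indicator hA]
    _ = (δ ^ finrank ℝ E)⁻¹ * ∫ x, F (y + x) ∂μ := by rw [integral_add_left_eq_self]
    _ = ∫ z, F (y + δ • z) ∂μ :=
        (Measure.integral_comp_smul_of_nonneg μ (fun x => F (y + x)) δ (hR := hδ.le)).symm
    _ = kernelMass μ ρ A δ y := by simp only [hF, integral_indicator hS, kernelMass]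

end KernelMass

theorem setIntegral_integral_mul_sub {G : Type*} [AddCommGroup G] [MeasurableSpace G]
    [MeasurableAdd₂ G] [MeasurableNeg G] {μ : Measure G} [SFinite μ] [μ.IsAddRightInvariant]
    {g K : G → ℝ} (hg : Integrable g μ) (hK : Integrable K μ) (A : Set G) :
    ∫ x in A, ∫ y, g y * K (x - y) ∂μ ∂μ = ∫ y, g y * ∫ x in A, K (x - y) ∂μ ∂μ := by
  have hint : Integrable (fun p : G × G => g p.2 * K (p.1 - p.2)) ((μ.restrict A).prod μ) := by
    have h := (hg.convolution_integrand (ContinuousLinearMap.mul ℝ ℝ) hK).mono_measure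
      (Measure.restrict_le_self (s := A ×ˢ univ))
    rwa [← Measure.prod_restrict, Measure.restrict_univ] at h
  rw [integral_integral_swap hint]
  simp only [integral_const_mul]

section Mollify

variable {n : ℕ} {ρ g : (Fin n → ℝ) → ℝ} {A : Set (Fin n → ℝ)} {δ : ℝ}

theorem setIntegral_mollify (hρ : Integrable ρ) (hg : Integrable g) (hA : MeasurableSet A)
    (hδ : 0 < δ) :
    ∫ x in A, mollify n ρ δ g x = ∫ y, g y * kernelMass volume ρ A δ y := by
  have hK : Integrable fun x => (δ ^ n)⁻¹ * ρ (δ⁻¹ • x) :=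
    (hρ.comp_smul (inv_ne_zero hδ.ne')).const_mul _
  have hmass (y) : ∫ x in A, (δ ^ n)⁻¹ * ρ (δ⁻¹ • (x - y)) = kernelMass volume ρ A δ y := by
    simpa only [finrank_fin_fun] using setIntegral_rescale_eq_kernelMass (μ := volume) hA hδ y
  simp only [mollify, setIntegral_integral_mul_sub hg hK A, hmass]

theorem setIntegral_mollify_le_integral (hρ_nonneg : ∀ x, 0 ≤ ρ x) (hρ : Integrable ρ)
    (hρ_int : ∫ x, ρ x = 1) (hg_nonneg : ∀ x, 0 ≤ g x) (hg : Integrable g)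
    (hA : MeasurableSet A) (hδ : 0 < δ) :
    ∫ x in A, mollify n ρ δ g x ≤ ∫ y, g y := by
  rw [setIntegral_mollify hρ hg hA hδ]
  refine integral_mono (integrable_mul_kernelMass hρ_nonneg hρ hg hA δ) hg fun y => ?_
  exact mul_le_of_le_one_right (hg_nonneg y)
    (hρ_int ▸ kernelMass_le_integral hρ_nonneg hρ δ y)

theorem setIntegral_le_setIntegral_mollify_add (hρ_nonneg : ∀ x, 0 ≤ ρ x) (hρ : Integrable ρ)
    (hg_nonneg : ∀ x, 0 ≤ g x) (hg : Integrable g) (hA : MeasurableSet A) (hδ : 0 < δ) :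
    ∫ y in A, g y ≤ (∫ x in A, mollify n ρ δ g x) +
      ∫ y in A, (1 - kernelMass volume ρ A δ y) * g y := by
  have hint := integrable_mul_kernelMass hρ_nonneg hρ hg hA δ
  calc ∫ y in A, g y
      = (∫ y in A, g y * kernelMass volume ρ A δ y) +
          ∫ y in A, (g y - g y * kernelMass volume ρ A δ y) := by
        rw [integral_sub hg.integrableOn hint.integrableOn, add_sub_cancel]
    _ ≤ (∫ y, g y * kernelMass volume ρ A δ y) +
          ∫ y in A, (g y - g y * kernelMass volume ρ A δ y) := by
        gcongr ?_ + _
        exact setIntegral_le_integral hint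
          (.of_forall fun y => mul_nonneg (hg_nonneg y) (kernelMass_nonneg hρ_nonneg δ y))
    _ = (∫ x in A, mollify n ρ δ g x) + ∫ y in A, (1 - kernelMass volume ρ A δ y) * g y := by
        rw [setIntegral_mollify hρ hg hA hδ]
        congr 2 with y
        ring

end Mollify

theorem statement1_general {n : ℕ} {ρ : (Fin n → ℝ) → ℝ} (hρ_nonneg : ∀ x, 0 ≤ ρ x)
    (hρ_int : ∫ x, ρ x = 1) {g : ℕ → (Fin n → ℝ) → ℝ} (hg_nonneg : ∀ j x, 0 ≤ g j x)
    (hg : UniformIntegrable g 1 volume) {δ : ℕ → ℝ} (hδ_pos : ∀ j, 0 < δ j)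
    (hδ_lim : Tendsto δ atTop (𝓝 0)) {A : Set (Fin n → ℝ)} (hA_open : IsOpen A)
    (hA_fin : volume A ≠ ∞) :
    liminf (fun j => ∫ x in A, g j x) atTop ≤
      liminf (fun j => ∫ x in A, mollify n ρ (δ j) (g j) x) atTop := by
  have hρ : Integrable ρ := .of_integral_ne_zero (by simp [hρ_int])
  have hg_int (j) : Integrable (g j) := memLp_one_iff_integrable.1 (hg.memLp j)
  have hA := hA_open.measurableSet
  obtain ⟨C, hC⟩ := exists_integral_le_of_uniformIntegrable hg
  have hA_le (j) : ∫ x in A, g j x ≤ C :=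
    (setIntegral_le_integral (hg_int j) (.of_forall (hg_nonneg j))).trans (hC j)
  have hmollify_le (j) : ∫ x in A, mollify n ρ (δ j) (g j) x ≤ C :=
    (setIntegral_mollify_le_integral hρ_nonneg hρ hρ_int (hg_nonneg j) (hg_int j) hA
      (hδ_pos j)).trans (hC j)
  exact liminf_le_liminf_of_le_add
    (fun j => setIntegral_le_setIntegral_mollify_add hρ_nonneg hρ (hg_nonneg j) (hg_int j) hA
      (hδ_pos j))
    (tendsto_setIntegral_one_sub_kernelMass_mul hρ_nonneg hρ hρ_int hg hA_open hA_fin hδ_lim)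
    (isBoundedUnder_of ⟨0, fun j => integral_nonneg (hg_nonneg j)⟩)
    (isBoundedUnder_of ⟨C, hA_le⟩)
    (isBoundedUnder_of ⟨C, hmollify_le⟩ : IsBoundedUnder (· ≤ ·) atTop _).isCoboundedUnder_ge

theorem statement1
    (n : ℕ) (hn : 1 ≤ n)
    (ρ : (Fin n → ℝ) → ℝ)
    (hρ_nonneg : ∀ x, 0 ≤ ρ x)
    (hρ_bdd : ∃ C : ℝ, ∀ x, ρ x ≤ C)
    (hρ_lsc : LowerSemicontinuous ρ)
    (hρ_supp : HasCompactSupport ρ)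
    (hρ_int : ∫ x, ρ x = 1)
    (A' : Set (Fin n → ℝ)) (hA'_open : IsOpen A') (hA'_bdd : Bornology.IsBounded A')
    (g : ℕ → (Fin n → ℝ) → ℝ)
    (hg_nonneg : ∀ j x, 0 ≤ g j x)
    (hg_int : ∀ j, Integrable (g j))
    (hg_supp : ∀ j, ∀ x ∉ A', g j x = 0)
    (hg_equi : ∀ ε > (0:ℝ), ∃ η > (0:ℝ), ∀ j, ∀ E : Set (Fin n → ℝ),
      MeasurableSet E → volume E ≤ ENNReal.ofReal η → ∫ x in E, g j x ≤ ε)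
    (δ : ℕ → ℝ) (hδ_pos : ∀ j, 0 < δ j)
    (hδ_lim : Tendsto δ atTop (𝓝 0))
    (A : Set (Fin n → ℝ)) (hA_open : IsOpen A)
    (hA_cpt : IsCompact (closure A)) (hA_sub : closure A ⊆ A') :
    liminf (fun j => ∫ x in A, g j x) atTop ≤
      liminf (fun j => ∫ x in A, mollify n ρ (δ j) (g j) x) atTop := by
  have : Nonempty (Fin n) := ⟨⟨0, hn⟩⟩
  have hg_unif : UnifIntegrable g 1 volume :=
    (unifIntegrable_one_iff_setIntegral_norm_le hg_int).2 <| by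
      simpa only [Real.norm_of_nonneg (hg_nonneg _ _)] using hg_equi
  have hg : UniformIntegrable g 1 volume :=
    uniformIntegrable_one_of_eq_zero_outside_compact (fun j => (hg_int j).aestronglyMeasurable)
      hg_unif hA'_bdd.isCompact_closure fun j x hx => hg_supp j x fun h => hx (subset_closure h)
  exact statement1_general hρ_nonneg hρ_int hg_nonneg hg hδ_pos hδ_lim hA_open
    ((measure_mono subset_closure).trans_lt hA_cpt.measure_lt_top).ne
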